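/- Let G be a graph with a circuit C and |E(C)| ≤ 35. If G admits a 4-flow (D, f) with E(G) − E(C) ⊆ supp(f), then G admits a 4-flow (D, g) with E(G) − E(C) ⊆ supp(g) and |E_{g=0}(C)| < |E(C)|/4. -/

import Mathlib

open Finset

/-- The number of endpoints of the (possibly looped) edge `s` equal to `v`
(a loop at `v` counts twice). -/
def edgeCount {V : Type} [DecidableEq V] (s : Sym2 V) (v : V) : ℕ :=
  Sym2.lift ⟨fun a b => (if a = v then 1 else 0) + (if b = v then 1 else 0),
    fun a b => by dsimp; omega⟩ s

/-- A `ℤ₂ × ℤ₂`-flow of a multigraph with edge-ends map `ends`: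
the values on edges incident with a vertex (loops counted twice) sum to `(0,0)`. -/
def IsFlow {V E : Type} [DecidableEq V] [Fintype E] (ends : E → Sym2 V)
    (f : E → ZMod 2 × ZMod 2) : Prop :=
  ∀ v : V, ∑ e : E, edgeCount (ends e) v • f e = 0

/-- An even subgraph (cycle): every vertex has even degree. -/
def IsEvenSub {V E : Type} [DecidableEq V] (ends : E → Sym2 V) (S : Finset E) : Prop :=
  ∀ v : V, Even (∑ e ∈ S, edgeCount (ends e) v)

/-- A circuit: a nonempty connected 2-regular subgraph, given by its edge set. -/
def IsCircuit {V E : Type} [DecidableEq V] (ends : E → Sym2 V) (CE : Finset E) : Prop :=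
  CE.Nonempty ∧
  (∀ v : V, (∑ e ∈ CE, edgeCount (ends e) v = 0) ∨ (∑ e ∈ CE, edgeCount (ends e) v = 2)) ∧
  ∀ e₁ ∈ CE, ∀ e₂ ∈ CE,
    Relation.ReflTransGen (fun a b => ∃ v : V, v ∈ ends a ∧ v ∈ ends b ∧ a ∈ CE ∧ b ∈ CE) e₁ e₂


abbrev Z2 := ZMod 2

lemma z2_cases (a : Z2) : a = 0 ∨ a = 1 := by
  revert a; decide

lemma z2_add_self (a : Z2) : a + a = 0 := by
  revert a; decide

lemma z2_ne_add (a b : Z2) (h : a ≠ b) : b + a = 1 := by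
  revert a b; decide

lemma z2_mixed (a b : Z2) : (a = 1 ∧ b = 0) ↔ a * (1 + b) = 1 := by
  revert a b; decide

/-- cyclic toggle of `β` at position `i`. -/
def tog (L : ℕ) (β : ℕ → Z2) (i : ℕ) : Z2 := β i + β (if i = 0 then L - 1 else i - 1)

/-- Two edge positions lie on the same side of every chord. -/
def SameCl (T : Finset ℕ) (m : ℕ → ℕ) (e e' : ℕ) : Prop :=
  ∀ i ∈ T, ((i ≤ e ↔ m i ≤ e) ↔ (i ≤ e' ↔ m i ≤ e'))

lemma tog_exists (L : ℕ) (β : ℕ → Z2) (i j : ℕ) (hij : i < j) (h : β i ≠ β j) :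
    ∃ k, i < k ∧ k ≤ j ∧ tog L β k = 1 := by
  induction j, hij using Nat.le_induction with
  | base =>
    refine ⟨i+1, by omega, le_rfl, ?_⟩
    simp only [tog]
    simp
    exact z2_ne_add _ _ h
  | succ j hj ih =>
    by_cases h' : β i = β j
    · refine ⟨j+1, by omega, le_rfl, ?_⟩
      simp only [tog]
      simp
      rw [h'] at h
      exact z2_ne_add _ _ h
    · obtain ⟨k, h1, h2, h3⟩ := ih h'
      exact ⟨k, h1, by omega, h3⟩

lemma tog_sum (L : ℕ) (β : ℕ → Z2) (p q : ℕ) (hpq : p ≤ q) :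
    ∑ i ∈ Finset.Icc p q, tog L β i = β q + β (if p = 0 then L - 1 else p - 1) := by
  induction q, hpq using Nat.le_induction with
  | base => simp [tog]
  | succ q hq ih =>
    rw [Finset.sum_Icc_succ_top (by omega), ih]
    simp only [tog]
    simp
    have := z2_add_self (β q)
    linear_combination this

lemma card_eq_sum_z2 (s : Finset ℕ) (f : ℕ → Z2) :
    ((s.filter (fun i => f i = 1)).card : Z2) = ∑ i ∈ s, f i := by
  rw [Finset.card_filter]
  push_cast
  apply Finset.sum_congr rfl
  intro i _
  rcases z2_cases (f i) with h | h <;> simp [h]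

lemma coreA (L : ℕ) (hL : 0 < L) (m : ℕ → ℕ) : ∀ (N : ℕ) (T : Finset ℕ) (β : ℕ → Z2),
    T.card = N →
    (∀ i ∈ T, i < L ∧ m i ∈ T ∧ m i ≠ i ∧ m (m i) = i) →
    (∀ e < L, ∃ e' < L, SameCl T m e e' ∧ β e ≠ β e') →
    (T.filter (fun j => tog L β j = 1 ∧ tog L β (m j) = 0)).card + 2 ≤
      ((Finset.range L).filter (fun i => i ∉ T ∧ tog L β i = 1)).card := by
  intro N
  induction N using Nat.strong_induction_on with
  | _ N IH =>
  intro T β hN hT hcl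
  rcases T.eq_empty_or_nonempty with rfl | hne
  · -- base case
    simp only [Finset.filter_empty, Finset.card_empty, Finset.notMem_empty, not_false_eq_true, true_and]
    obtain ⟨e', he', -, hne⟩ := hcl 0 hL
    obtain ⟨k, h1, h2, h3⟩ := tog_exists L β 0 e' (by rcases Nat.eq_zero_or_pos e' with h | h; · exact absurd (by rw [h]) hne
                                                      · exact h) hne
    have hsum := tog_sum L β 0 (L-1) (by omega)
    rw [if_pos rfl, z2_add_self] at hsum
    have hI : Finset.Icc 0 (L-1) = Finset.range L := by ext; simp; omega
    rw [hI, ← card_eq_sum_z2] at hsum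
    have hev : Even ((Finset.range L).filter (fun i => tog L β i = 1)).card :=
      (ZMod.natCast_eq_zero_iff_even).1 hsum
    have hpos : 0 < ((Finset.range L).filter (fun i => tog L β i = 1)).card :=
      Finset.card_pos.2 ⟨k, by simp; exact ⟨by omega, h3⟩⟩
    obtain ⟨r, hr⟩ := hev
    omega
  · -- minimal closed interval
    have hex : ∃ d p q, p ∈ T ∧ q ∈ T ∧ p < q ∧ q - p = d ∧ ∀ i ∈ T, p ≤ i → i ≤ q → (p ≤ m i ∧ m i ≤ q) := by
      refine ⟨_, T.min' hne, T.max' hne, T.min'_mem hne, T.max'_mem hne, ?_, rfl, ?_⟩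
      · obtain ⟨i, hi⟩ := hne
        obtain ⟨_, h2, h3, _⟩ := hT i hi
        rcases lt_or_gt_of_ne h3 with h | h
        · exact lt_of_le_of_lt (T.min'_le _ h2) (lt_of_lt_of_le h (T.le_max' _ hi))
        · exact lt_of_le_of_lt (T.min'_le _ hi) (lt_of_lt_of_le h (T.le_max' _ h2))
      · intro i hi _ _
        exact ⟨T.min'_le _ (hT i hi).2.1, T.le_max' _ (hT i hi).2.1⟩
    classical
    obtain ⟨p, q, hp, hq, hpq, hd, hclosed⟩ := Nat.find_spec hex
    have hmin : ∀ p' q', p' ∈ T → q' ∈ T → p' < q' → q' - p' < q - p →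
        (∀ i ∈ T, p' ≤ i → i ≤ q' → (p' ≤ m i ∧ m i ≤ q')) → False := by
      intro p' q' a1 a2 a3 a4 a5
      exact Nat.find_min hex (by rw [← hd]; exact a4) ⟨p', q', a1, a2, a3, rfl, a5⟩
    clear hd
    clear hex
    -- any closed nonempty window is everything
    have hwin : ∀ A B : ℕ, p ≤ A → B ≤ q → (∃ i ∈ T, A ≤ i ∧ i ≤ B) →
        (∀ i ∈ T, A ≤ i → i ≤ B → (A ≤ m i ∧ m i ≤ B)) → A = p ∧ B = q := by
      intro A B hA hB hi hc
      by_contra hcon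
      set W := T.filter (fun i => A ≤ i ∧ i ≤ B) with hW
      have hWne : W.Nonempty := by
        obtain ⟨i, hi, h⟩ := hi
        exact ⟨i, by simp [hW, hi, h]⟩
      have m1 := W.min'_mem hWne
      have m2 := W.max'_mem hWne
      have hmW : ∀ i ∈ W, m i ∈ W := by
        intro i hi
        simp only [hW, Finset.mem_filter] at hi ⊢
        exact ⟨(hT i hi.1).2.1, hc i hi.1 hi.2.1 hi.2.2⟩
      have m1' := hmW _ m1
      set a := W.min' hWne with ha
      set b := W.max' hWne with hb
      have m1s := m1
      have m2s := m2
      simp only [hW, Finset.mem_filter] at m1s m2s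
      have hab : a < b := by
        have := (hT a m1s.1).2.2.1
        have e1 : m a ≤ b := W.le_max' _ m1'
        have e2 : a ≤ m a := W.min'_le _ m1'
        omega
      refine hmin a b m1s.1 m2s.1 hab (by omega) ?_
      intro i hi h1 h2
      have : m i ∈ W := hmW i (by simp [hW, hi]; omega)
      exact ⟨W.min'_le _ this, W.le_max' _ this⟩
    -- inner classes are confined
    have hconf : ∀ e e', p ≤ e → e < q → SameCl T m e e' →
        p ≤ e' ∧ e' < q ∧ (∀ i ∈ T, (i ≤ e ↔ i ≤ e')) := by
      intro e e' h1 h2 hs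
      have key : ∀ i ∈ T, ((i ≤ e ↔ m i ≤ e) ↔ (i ≤ e' ↔ m i ≤ e')) := hs
      have hpe' : p ≤ e' := by
        by_contra hlt
        -- window [p,e]
        have := hwin p e le_rfl (by omega) ⟨p, hp, le_rfl, h1⟩ (by
          intro i hi a1 a2
          have k1 := key i hi
          have k2 := hclosed i hi a1 (by omega)
          refine ⟨k2.1, ?_⟩
          by_contra h
          have : ¬ (i ≤ e ↔ m i ≤ e) := by tauto
          have h3 : ¬ i ≤ e' := by omega
          have h4 : ¬ m i ≤ e' := by omega
          tauto)
        omega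
      have hqe' : e' < q := by
        by_contra hlt
        have := hwin (e+1) q (by omega) le_rfl ⟨q, hq, h2, le_rfl⟩ (by
          intro i hi a1 a2
          have k1 := key i hi
          have k2 := hclosed i hi (by omega) (by omega)
          refine ⟨?_, k2.2⟩
          by_contra h
          have : m i ≤ e := by omega
          have : ¬ (i ≤ e) := by omega
          have h3 : i ≤ e' := by omega
          have h4 : m i ≤ e' := by omega
          tauto)
        omega
      refine ⟨hpe', hqe', ?_⟩
      by_contra hcon
      push Not at hcon
      obtain ⟨i, hi, hcase⟩ := hcon
      rcases Nat.lt_trichotomy e e' with hlt | heq | hgt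
      · have := hwin (e+1) e' (by omega) (by omega) ⟨i, hi, by omega⟩ (by
          intro i hi a1 a2
          have k1 := key i hi
          by_contra h
          omega)
        omega
      · subst heq; omega
      · have := hwin (e'+1) e (by omega) (by omega) ⟨i, hi, by omega⟩ (by
          intro i hi a1 a2
          have k1 := key i hi
          by_contra h
          omega)
        omega
    -- marks in gaps
    have hqL : q < L := (hT q hq).1
    set I := T.filter (fun i => p ≤ i ∧ i ≤ q) with hI
    set K := (Finset.range L).filter (fun i => (i ∉ T ∧ tog L β i = 1) ∧ p ≤ i ∧ i ≤ q) with hK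
    have hgap : ∀ i ∈ I.erase q, ∃ k ∈ K, i < k ∧ ∀ j ∈ T, (j ≤ i ↔ j ≤ k) := by
      intro i hi
      simp only [hI, Finset.mem_erase, Finset.mem_filter] at hi
      obtain ⟨hiq, hiT, hpi, hiq'⟩ := hi
      obtain ⟨e', he', hs, hb⟩ := hcl i (by omega)
      obtain ⟨c1, c2, c3⟩ := hconf i e' hpi (by omega) hs
      have hlt : i < e' := by
        have := (c3 i hiT).1 le_rfl
        rcases Nat.lt_or_eq_of_le this with h | h
        · exact h
        · exact absurd (by rw [h]) hb
      obtain ⟨k, k1, k2, k3⟩ := tog_exists L β i e' hlt hb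
      have hall : ∀ j ∈ T, (j ≤ i ↔ j ≤ k) := by
        intro j hj
        have := c3 j hj
        constructor
        · intro h; omega
        · intro h; exact this.2 (by omega)
      refine ⟨k, ?_, k1, hall⟩
      simp only [hK, Finset.mem_filter, Finset.mem_range]
      refine ⟨by omega, ⟨?_, k3⟩, by omega, by omega⟩
      intro hkT
      have := (hall k hkT).2 le_rfl
      omega
    have hqI : q ∈ I := by simp [hI, hq]; omega
    have hcardK : I.card ≤ K.card + 1 := by
      have h1 : (I.erase q).card ≤ K.card := by
        choose! g hg using hgap
        apply Finset.card_le_card_of_injOn g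
        · intro i hi; exact (hg i hi).1
        · intro i hi j hj hij
          have a1 := hg i hi
          have a2 := hg j hj
          have b1 : i ∈ T := (Finset.mem_filter.1 (Finset.mem_of_mem_erase hi)).1
          have b2 : j ∈ T := (Finset.mem_filter.1 (Finset.mem_of_mem_erase hj)).1
          have c1 := a1.2.2 j b2
          have c2 := a2.2.2 i b1
          have := a1.2.1
          have := a2.2.1
          omega
      rw [Finset.card_erase_of_mem hqI] at h1
      omega
    set MI := I.filter (fun j => tog L β j = 1 ∧ tog L β (m j) = 0) with hMI
    have hmI : ∀ i ∈ I, m i ∈ I := by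
      intro i hi
      simp only [hI, Finset.mem_filter] at hi ⊢
      exact ⟨(hT i hi.1).2.1, hclosed i hi.1 hi.2.1 hi.2.2⟩
    have hcardM : MI.card + 1 ≤ I.card := by
      have : MI ⊂ I := by
        rw [Finset.ssubset_iff_of_subset (Finset.filter_subset _ _)]
        by_cases h : q ∈ MI
        · refine ⟨m q, hmI q hqI, ?_⟩
          simp only [hMI, Finset.mem_filter] at h ⊢
          rintro ⟨_, h', _⟩
          rw [h.2.2] at h'
          exact absurd h' (by decide)
        · exact ⟨q, hqI, h⟩
      exact Finset.card_lt_card this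
    -- parity
    have hpar : ((K.card : ℕ) : Z2) + (MI.card : Z2) = β q + β (if p = 0 then L - 1 else p - 1) := by
      rw [← tog_sum L β p q hpq.le]
      have hsplit : Finset.Icc p q = (Finset.Icc p q).filter (fun i => i ∉ T) ∪ I := by
        ext i; simp [hI]; tauto
      have hdisj : Disjoint ((Finset.Icc p q).filter (fun i => i ∉ T)) I := by
        rw [Finset.disjoint_left]; intro i hi hi'
        simp [hI] at hi hi'; tauto
      rw [hsplit, Finset.sum_union hdisj]
      congr 1
      · rw [← card_eq_sum_z2]
        congr 2
        ext i
        simp [hK]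
        constructor
        · rintro ⟨_, ⟨h1, h2⟩, h3, h4⟩; exact ⟨⟨⟨h3, h4⟩, h1⟩, h2⟩
        · rintro ⟨⟨⟨h3, h4⟩, h1⟩, h2⟩; exact ⟨by omega, ⟨h1, h2⟩, h3, h4⟩
      · have h0 : ∑ j ∈ I, tog L β j * tog L β (m j) = 0 := by
          apply Finset.sum_involution (fun j _ => m j)
          · intro j hj
            have := (hT j (Finset.mem_filter.1 hj).1).2.2.2
            rw [this, mul_comm]; exact z2_add_self _
          · intro j hj _
            exact (hT j (Finset.mem_filter.1 hj).1).2.2.1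
          · intro j hj; exact hmI j hj
          · intro j hj; exact (hT j (Finset.mem_filter.1 hj).1).2.2.2
        have h1 : (MI.card : Z2) = ∑ j ∈ I, tog L β j * (1 + tog L β (m j)) := by
          rw [← card_eq_sum_z2]
          congr 2
          rw [hMI]
          apply Finset.filter_congr
          intro j _
          exact z2_mixed _ _
        rw [h1]
        simp only [mul_add, mul_one, Finset.sum_add_distrib, h0, add_zero]
    -- new diagram
    set β' : ℕ → Z2 := fun e => if p ≤ e ∧ e < q then β q else β e with hβ'
    set T' := T.filter (fun i => ¬ (p ≤ i ∧ i ≤ q)) with hT'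
    have hT'card : T'.card < N := by
      rw [← hN]
      apply Finset.card_lt_card
      rw [Finset.ssubset_iff_of_subset (Finset.filter_subset _ _)]
      exact ⟨q, hq, by simp; intros; omega⟩
    have hmT' : ∀ i ∈ T', m i ∈ T' := by
      intro i hi
      simp only [hT', Finset.mem_filter] at hi ⊢
      refine ⟨(hT i hi.1).2.1, ?_⟩
      intro h
      have := hclosed (m i) (hT i hi.1).2.1 h.1 h.2
      rw [(hT i hi.1).2.2.2] at this
      exact hi.2 this
    have hsub : ∀ e e', SameCl T m e e' → SameCl T' m e e' := by
      intro e e' h i hi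
      exact h i (Finset.mem_filter.1 hi).1
    have hnew := IH T'.card hT'card T' β' rfl (by
      intro i hi
      have := hT i (Finset.mem_filter.1 hi).1
      exact ⟨this.1, hmT' i hi, this.2.2⟩) (by
      have hout : ∀ e < L, ¬ (p ≤ e ∧ e < q) → ∃ e' < L, SameCl T' m e e' ∧ β' e ≠ β' e' := by
        intro e he hn
        obtain ⟨e', he', hs, hb⟩ := hcl e he
        refine ⟨e', he', hsub _ _ hs, ?_⟩
        have hn' : ¬ (p ≤ e' ∧ e' < q) := by
          intro h
          have := hconf e' e h.1 h.2 (fun i hi => (hs i hi).symm)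
          omega
        simp only [hβ', if_neg hn, if_neg hn']
        exact hb
      intro e he
      by_cases hn : p ≤ e ∧ e < q
      · obtain ⟨e', he', hs, hb⟩ := hout q hqL (by omega)
        refine ⟨e', he', ?_, ?_⟩
        · intro i hi
          rw [← hs i hi]
          have a1 := hmT' i hi
          simp only [hT', Finset.mem_filter] at hi a1
          have : i ≤ e ↔ i ≤ q := by omega
          have : m i ≤ e ↔ m i ≤ q := by omega
          tauto
        · have : β' e = β' q := by simp [hβ', hn]
          rw [this]; exact hb
      · exact hout e he hn)
    -- toggles of new
    have htog_out : ∀ i < L, ¬ (p ≤ i ∧ i ≤ q) → tog L β' i = tog L β i := by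
      intro i hi hn
      simp only [tog, hβ']
      rw [if_neg (by omega : ¬ (p ≤ i ∧ i < q))]
      congr 1
      rw [if_neg]
      split_ifs <;> omega
    have htog_in : ∀ i, p < i → i ≤ q → tog L β' i = 0 := by
      intro i h1 h2
      simp only [tog, hβ']
      rw [if_neg (by omega : ¬ i = 0), if_pos (by omega : p ≤ i - 1 ∧ i - 1 < q)]
      by_cases h : i = q
      · rw [if_neg (by omega), h]; exact z2_add_self _
      · rw [if_pos (by omega)]; exact z2_add_self _
    have htog_p : tog L β' p = (K.card : Z2) + (MI.card : Z2) := by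
      rw [hpar]
      simp only [tog, hβ']
      rw [if_pos (by omega)]
      congr 1
      rw [if_neg]
      split_ifs <;> omega
    set K' := (Finset.range L).filter (fun i => (i ∉ T ∧ tog L β i = 1) ∧ ¬ (p ≤ i ∧ i ≤ q)) with hK'
    set M' := T.filter (fun j => (tog L β j = 1 ∧ tog L β (m j) = 0) ∧ ¬ (p ≤ j ∧ j ≤ q)) with hM'
    have ht : ((Finset.range L).filter (fun i => i ∉ T ∧ tog L β i = 1)).card = K.card + K'.card := by
      rw [← Finset.card_filter_add_card_filter_not
        (s := (Finset.range L).filter (fun i => i ∉ T ∧ tog L β i = 1)) (fun i => p ≤ i ∧ i ≤ q),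
        Finset.filter_filter, Finset.filter_filter]
    have hm : (T.filter (fun j => tog L β j = 1 ∧ tog L β (m j) = 0)).card = MI.card + M'.card := by
      have : MI = T.filter (fun j => (tog L β j = 1 ∧ tog L β (m j) = 0) ∧ (p ≤ j ∧ j ≤ q)) := by
        ext j; simp [hMI, hI]; tauto
      rw [this, ← Finset.card_filter_add_card_filter_not
        (s := T.filter (fun j => tog L β j = 1 ∧ tog L β (m j) = 0)) (fun i => p ≤ i ∧ i ≤ q),
        Finset.filter_filter, Finset.filter_filter]
    have hm' : T'.filter (fun j => tog L β' j = 1 ∧ tog L β' (m j) = 0) = M' := by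
      ext j
      simp only [hT', hM', Finset.mem_filter]
      constructor
      · rintro ⟨⟨h1, h2⟩, h3⟩
        have hj := hmT' j (by simp only [hT', Finset.mem_filter]; exact ⟨h1, h2⟩)
        simp only [hT', Finset.mem_filter] at hj
        rw [htog_out j (hT j h1).1 h2, htog_out (m j) (hT _ hj.1).1 hj.2] at h3
        exact ⟨h1, h3, h2⟩
      · rintro ⟨h1, h3, h2⟩
        have hj := hmT' j (by simp only [hT', Finset.mem_filter]; exact ⟨h1, h2⟩)
        simp only [hT', Finset.mem_filter] at hj
        rw [← htog_out j (hT j h1).1 h2, ← htog_out (m j) (hT _ hj.1).1 hj.2] at h3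
        exact ⟨⟨h1, h2⟩, h3⟩
    rw [hm'] at hnew
    rw [ht, hm]
    have hsubK : (Finset.range L).filter (fun i => i ∉ T' ∧ tog L β' i = 1) ⊆
        K' ∪ (if tog L β' p = 1 then {p} else ∅) := by
      intro i hi
      simp only [hT', Finset.mem_filter, Finset.mem_range, Finset.mem_union] at hi ⊢
      obtain ⟨hiL, h1, h2⟩ := hi
      by_cases hin : p ≤ i ∧ i ≤ q
      · right
        have : i = p := by
          by_contra hne
          rw [htog_in i (by omega) hin.2] at h2
          exact absurd h2 (by decide)
        subst this
        rw [if_pos h2]; simp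
      · left
        simp only [hK', Finset.mem_filter, Finset.mem_range]
        refine ⟨hiL, ⟨fun h => h1 ⟨h, hin⟩, ?_⟩, hin⟩
        rw [← htog_out i hiL hin]; exact h2
    have hle := (Finset.card_le_card hsubK).trans (Finset.card_union_le _ _)
    by_cases hp1 : tog L β' p = 1
    · rw [if_pos hp1, Finset.card_singleton] at hle
      have : K.card ≠ MI.card := by
        intro h
        rw [htog_p, h, z2_add_self] at hp1
        exact absurd hp1 (by decide)
      omega
    · rw [if_neg hp1, Finset.card_empty] at hle
      omega

/-- Side indicator of the chord `{i, m i}` at edge position `e`. -/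
def chordInd (m : ℕ → ℕ) (i e : ℕ) : Z2 := (if i ≤ e then 1 else 0) + (if m i ≤ e then 1 else 0)

/-- The sign character of `ZMod 2`. -/
def sg (a : Z2) : ℤ := if a = 0 then 1 else -1

lemma sg_add (a b : Z2) : sg (a + b) = sg a * sg b := by
  revert a b; decide

lemma sg_sum (S : Finset ℕ) (f : ℕ → Z2) : sg (∑ i ∈ S, f i) = ∏ i ∈ S, sg (f i) := by
  induction S using Finset.induction_on with
  | empty => simp [sg]
  | insert a s ha ih => rw [Finset.sum_insert ha, Finset.prod_insert ha, sg_add, ih]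

lemma sg_mul_self (a : Z2) : sg a * sg a = 1 := by
  revert a; decide

lemma sg_ne (a b : Z2) (h : a ≠ b) : 1 + sg a * sg b = 0 := by
  revert a b; decide

lemma sg_nonneg (a b : Z2) : 0 ≤ 1 + sg a * sg b := by
  revert a b; decide

lemma sum_sg_eq_zero (A : Finset ℕ) (x : ℕ → Z2)
    (h : (A.filter (fun e => x e = 0)).card = (A.filter (fun e => x e = 1)).card) :
    ∑ e ∈ A, sg (x e) = 0 := by
  have h1 : ∀ e, sg (x e) = (if x e = 0 then (1 : ℤ) else 0) - (if x e = 1 then 1 else 0) := by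
    intro e
    rcases z2_cases (x e) with h | h <;> simp [h, sg]
  simp only [h1, Finset.sum_sub_distrib]
  rw [← Finset.natCast_card_filter, ← Finset.natCast_card_filter, h, sub_self]

lemma coreB (L : ℕ) (T : Finset ℕ) (m : ℕ → ℕ) (φ β : ℕ → Z2)
    (H : ∀ S ⊆ T, ∀ c : Z2,
      (((Finset.range L).filter (fun e => φ e = c)).filter
        (fun e => β e + ∑ i ∈ S, chordInd m i e = 0)).card =
      (((Finset.range L).filter (fun e => φ e = c)).filter
        (fun e => β e + ∑ i ∈ S, chordInd m i e = 1)).card) :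
    ∀ e < L, ∃ e' < L, SameCl T m e e' ∧ β e ≠ β e' := by
  intro e0 he0
  by_contra hcon
  push Not at hcon
  set A := (Finset.range L).filter (fun e => φ e = φ e0) with hA
  have h1 : ∀ S ∈ T.powerset, ∑ e ∈ A, sg (β e) * ∏ i ∈ S, sg (chordInd m i e) = 0 := by
    intro S hS
    have := sum_sg_eq_zero A _ (H S (Finset.mem_powerset.1 hS) (φ e0))
    simpa only [sg_add, sg_sum] using this
  have h2 : ∑ S ∈ T.powerset, (∏ i ∈ S, sg (chordInd m i e0)) *
      ∑ e ∈ A, sg (β e) * ∏ i ∈ S, sg (chordInd m i e) = 0 :=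
    Finset.sum_eq_zero (fun S hS => by rw [h1 S hS, mul_zero])
  have h3 : ∑ S ∈ T.powerset, (∏ i ∈ S, sg (chordInd m i e0)) *
      ∑ e ∈ A, sg (β e) * ∏ i ∈ S, sg (chordInd m i e) =
      ∑ e ∈ A, sg (β e) * ∏ i ∈ T, (1 + sg (chordInd m i e0) * sg (chordInd m i e)) := by
    simp only [Finset.prod_one_add, Finset.mul_sum, Finset.prod_mul_distrib]
    rw [Finset.sum_comm]
    apply Finset.sum_congr rfl; intro e _
    apply Finset.sum_congr rfl; intro S _
    ring
  rw [h3] at h2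
  have h4 : 0 < ∑ e ∈ A, sg (β e0) * (sg (β e) *
      ∏ i ∈ T, (1 + sg (chordInd m i e0) * sg (chordInd m i e))) := by
    apply Finset.sum_pos'
    · intro e he
      by_cases hs : SameCl T m e0 e
      · rw [← hcon e (by simp [hA] at he; exact he.1) hs, ← mul_assoc, sg_mul_self, one_mul]
        exact Finset.prod_nonneg (fun i _ => sg_nonneg _ _)
      · unfold SameCl at hs
        push Not at hs
        obtain ⟨i, hi, hne⟩ := hs
        rw [Finset.prod_eq_zero hi]
        · simp
        · apply sg_ne
          unfold chordInd
          by_cases a1 : i ≤ e0 <;> by_cases a2 : m i ≤ e0 <;> by_cases a3 : i ≤ e <;>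
            by_cases a4 : m i ≤ e <;> simp only [a1, a2, a3, a4, if_true, if_false] <;>
            first | decide | (exfalso; omega)
    · refine ⟨e0, by simp [hA, he0], ?_⟩
      rw [← mul_assoc, sg_mul_self, one_mul]
      apply Finset.prod_pos
      intro i _
      rw [sg_mul_self]; norm_num
  rw [← Finset.mul_sum, h2, mul_zero] at h4
  exact lt_irrefl _ h4

/-- Eulerian orientation: an even edge set carries an integer flow with values `±1`. -/
lemma euler {V E : Type} [DecidableEq V] [DecidableEq E] : ∀ (N : ℕ) (S : Finset E) (D : E → V × V),
    S.card = N →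
    (∀ v, ∑ e ∈ S, ((if (D e).1 = v then (1 : Z2) else 0) + (if (D e).2 = v then 1 else 0)) = 0) →
    ∃ h : E → ℤ, (∀ e ∈ S, h e = 1 ∨ h e = -1) ∧ (∀ e, e ∉ S → h e = 0) ∧
      ∀ v, ∑ e ∈ S, h e * ((if (D e).1 = v then (1 : ℤ) else 0) - (if (D e).2 = v then 1 else 0)) = 0 := by
  intro N
  induction N with
  | zero =>
    intro S D hS _
    rw [Finset.card_eq_zero] at hS
    subst hS
    exact ⟨fun _ => 0, by simp, by simp, by simp⟩
  | succ N ih =>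
    intro S D hS hev
    have hne : S.Nonempty := Finset.card_pos.1 (by omega)
    obtain ⟨e1, he1⟩ := hne
    by_cases hloop : (D e1).1 = (D e1).2
    · obtain ⟨h, h1, h2, h3⟩ := ih (S.erase e1) D (by rw [Finset.card_erase_of_mem he1]; omega) (by
        intro v
        have := hev v
        rw [← Finset.add_sum_erase S _ he1, hloop, z2_add_self, zero_add] at this
        exact this)
      refine ⟨Function.update h e1 1, ?_, ?_, ?_⟩
      · intro e he
        by_cases hh : e = e1
        · subst hh; simp
        · rw [Function.update_of_ne hh]; exact h1 e (by simp [hh, he])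
      · intro e he
        have hh : e ≠ e1 := fun h => he (h ▸ he1)
        rw [Function.update_of_ne hh]; exact h2 e (by simp [he])
      · intro v
        rw [← Finset.add_sum_erase S _ he1, hloop, sub_self, mul_zero, zero_add]
        refine Eq.trans ?_ (h3 v)
        apply Finset.sum_congr rfl
        intro e he
        rw [Function.update_of_ne (Finset.ne_of_mem_erase he)]
    · have hex : ∃ e2 ∈ S.erase e1, (D e2).1 = (D e1).2 ∨ (D e2).2 = (D e1).2 := by
        by_contra hcon
        push Not at hcon
        have := hev (D e1).2
        rw [← Finset.add_sum_erase S _ he1, Finset.sum_eq_zero (s := S.erase e1)] at this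
        · simp [hloop] at this
        · intro e he
          have := hcon e he
          simp [this.1, this.2]
      obtain ⟨e2, he2, hor⟩ := hex
      have h12 : e2 ≠ e1 := Finset.ne_of_mem_erase he2
      have he2S : e2 ∈ S := Finset.mem_of_mem_erase he2
      have he1' : e1 ∈ S.erase e2 := by simp [he1, h12.symm]
      -- the other end of e2
      obtain ⟨w, σ, hσ, hw⟩ : ∃ (w : V) (σ : ℤ), (σ = 1 ∨ σ = -1) ∧
          ((D e2 = ((D e1).2, w) ∧ σ = 1) ∨ (D e2 = (w, (D e1).2) ∧ σ = -1)) := by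
        rcases hor with h | h
        · exact ⟨(D e2).2, 1, by simp, Or.inl ⟨by rw [← h], rfl⟩⟩
        · exact ⟨(D e2).1, -1, by simp, Or.inr ⟨by rw [← h], rfl⟩⟩
      set D' := Function.update D e1 ((D e1).1, w) with hD'
      have hD'1 : D' e1 = ((D e1).1, w) := by simp [hD']
      have hD'o : ∀ e ∈ (S.erase e2).erase e1, D' e = D e := by
        intro e he
        rw [hD', Function.update_of_ne (Finset.ne_of_mem_erase he)]
      obtain ⟨h, h1, h2, h3⟩ := ih (S.erase e2) D' (by rw [Finset.card_erase_of_mem he2S]; omega) (by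
        intro v
        have := hev v
        rw [← Finset.add_sum_erase S _ he2S, ← Finset.add_sum_erase _ _ he1'] at this
        rw [← Finset.add_sum_erase _ _ he1', Finset.sum_congr rfl (fun e he => by rw [hD'o e he]), hD'1]
        have h0 := z2_add_self (if (D e1).2 = v then (1 : Z2) else 0)
        rcases hw with ⟨hw, _⟩ | ⟨hw, _⟩
        · rw [hw] at this; dsimp only at this ⊢; linear_combination this - h0
        · rw [hw] at this; dsimp only at this ⊢; linear_combination this - h0)
      refine ⟨Function.update h e2 (σ * h e1), ?_, ?_, ?_⟩
      · intro e he
        by_cases hh : e = e2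
        · subst hh; simp only [Function.update_self]
          rcases hσ with h | h <;> rcases h1 e1 he1' with h' | h' <;> simp [h, h']
        · rw [Function.update_of_ne hh]; exact h1 e (by simp [hh, he])
      · intro e he
        have hh : e ≠ e2 := fun h => he (h ▸ he2S)
        rw [Function.update_of_ne hh]; exact h2 e (by simp [he])
      · intro v
        have := h3 v
        rw [← Finset.add_sum_erase _ _ he1', Finset.sum_congr rfl (fun e he => by rw [hD'o e he]), hD'1] at this
        rw [← Finset.add_sum_erase S _ he2S, ← Finset.add_sum_erase _ _ he1']
        rw [Finset.sum_congr (s₁ := (S.erase e2).erase e1) rfl (fun e he => by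
          rw [Function.update_of_ne (Finset.ne_of_mem_erase (Finset.mem_of_mem_erase he))])]
        rw [Function.update_self, Function.update_of_ne h12.symm]
        rcases hw with ⟨hw, hs⟩ | ⟨hw, hs⟩
        · rw [hw, hs]; dsimp only at this ⊢; linear_combination this
        · rw [hw, hs]; dsimp only at this ⊢; linear_combination this

lemma edgeCount_mk {V : Type} [DecidableEq V] (a b v : V) :
    edgeCount s(a, b) v = (if a = v then 1 else 0) + (if b = v then 1 else 0) := rfl

lemma edgeCount_pos {V : Type} [DecidableEq V] (s : Sym2 V) (v : V) :
    edgeCount s v ≠ 0 ↔ v ∈ s := by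
  induction s using Sym2.ind with
  | _ a b =>
    rw [edgeCount_mk, Sym2.mem_iff, eq_comm (a := v), eq_comm (a := v)]
    by_cases h1 : a = v <;> by_cases h2 : b = v <;> simp [h1, h2]

/-- Cyclic enumeration of a circuit. -/
lemma circuit_enum {V E : Type} [DecidableEq V] [DecidableEq E] (ends : E → Sym2 V) (CE : Finset E)
    (hC : IsCircuit ends CE) :
    ∃ (v : ℕ → V) (e : ℕ → E), v CE.card = v 0 ∧ Set.InjOn v (Finset.range CE.card) ∧
      Set.InjOn e (Finset.range CE.card) ∧ (Finset.range CE.card).image e = CE ∧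
      ∀ i < CE.card, ends (e i) = s(v i, v (i+1)) := by
  obtain ⟨hne, hdeg, hconn⟩ := hC
  let P : ℕ → Prop := fun j => ∃ (v : ℕ → V) (e : ℕ → E), Set.InjOn v (Finset.range j) ∧
      Set.InjOn e (Finset.range j) ∧ (∀ i < j, e i ∈ CE) ∧
      ∀ i < j, ends (e i) = s(v i, v (i+1))
  have hP1 : P 1 := by
    obtain ⟨x, hx⟩ := hne
    obtain ⟨a, b, hab⟩ : ∃ a b, ends x = s(a, b) := by
      induction h : ends x using Sym2.ind with
      | _ a b => exact ⟨a, b, rfl⟩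
    refine ⟨fun i => if i = 0 then a else b, fun _ => x, ?_, ?_, ?_, ?_⟩
    · simp
    · simp
    · intro _ _; exact hx
    · intro i hi; have : i = 0 := by omega
      subst this; simpa using hab
  obtain ⟨j, hj0, ⟨v, e, hv, he, hmem, hends⟩, hnP⟩ : ∃ j, 0 < j ∧ P j ∧ ¬ P (j+1) := by
    by_contra hcon
    push Not at hcon
    have hall : ∀ j, P (j+1) := by
      intro j
      induction j with
      | zero => exact hP1
      | succ j ih => exact hcon (j+1) (by omega) ih
    obtain ⟨v, e, hv, he, hmem, -⟩ := hall CE.card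
    have := Finset.card_le_card_of_injOn e (s := Finset.range (CE.card+1)) (t := CE)
      (fun i hi => hmem i (by simpa using hi)) he
    simp at this
  have hsub : (Finset.range j).image e ⊆ CE := by
    intro x hx
    obtain ⟨i, hi, rfl⟩ := Finset.mem_image.1 hx
    exact hmem i (by simpa using hi)
  have hdegS : ∀ u, ∑ x ∈ (Finset.range j).image e, edgeCount (ends x) u =
      ∑ i ∈ Finset.range j, (if v i = u then 1 else 0) + ∑ i ∈ Finset.range j, (if v (i+1) = u then 1 else 0) := by
    intro u
    rw [Finset.sum_image he, ← Finset.sum_add_distrib]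
    apply Finset.sum_congr rfl
    intro i hi
    rw [hends i (by simpa using hi), edgeCount_mk]
  have hsplit : ∀ u, ∑ x ∈ CE, edgeCount (ends x) u =
      ∑ x ∈ CE \ (Finset.range j).image e, edgeCount (ends x) u +
      (∑ i ∈ Finset.range j, (if v i = u then 1 else 0) + ∑ i ∈ Finset.range j, (if v (i+1) = u then 1 else 0)) := by
    intro u
    rw [← hdegS u, Finset.sum_sdiff hsub]
  obtain ⟨n, rfl⟩ : ∃ n, j = n + 1 := ⟨j - 1, by omega⟩
  -- the end vertex was visited
  have hvis : ∃ i < n + 1, v i = v (n+1) := by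
    by_contra hcon
    push Not at hcon
    have hsum1 : ∑ i ∈ Finset.range (n+1), (if v i = v (n+1) then 1 else 0) = 0 :=
      Finset.sum_eq_zero (fun i hi => by rw [if_neg (hcon i (by simpa using hi))])
    have hsum2 : ∑ i ∈ Finset.range (n+1), (if v (i+1) = v (n+1) then 1 else 0) = 1 := by
      rw [Finset.sum_range_succ, if_pos rfl, Finset.sum_eq_zero]
      intro i hi
      rw [if_neg (hcon (i+1) (by simp at hi; omega))]
    have h := hsplit (v (n+1))
    rw [hsum1, hsum2] at h
    have hnz : ∑ x ∈ CE \ (Finset.range (n+1)).image e, edgeCount (ends x) (v (n+1)) ≠ 0 := by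
      rcases hdeg (v (n+1)) with h' | h' <;> omega
    obtain ⟨x, hx, hxn⟩ := Finset.exists_ne_zero_of_sum_ne_zero hnz
    rw [edgeCount_pos] at hxn
    obtain ⟨w, hw⟩ := Sym2.mem_iff_exists.1 hxn
    apply hnP
    simp only [Finset.mem_sdiff, Finset.mem_image, Finset.mem_range, not_exists, not_and] at hx
    refine ⟨Function.update v (n+2) w, Function.update e (n+1) x, ?_, ?_, ?_, ?_⟩
    · intro a ha b hb hab
      simp only [Finset.coe_range, Set.mem_Iio] at ha hb
      rw [Function.update_of_ne (by omega), Function.update_of_ne (by omega)] at hab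
      by_cases ha' : a = n + 1 <;> by_cases hb' : b = n + 1
      · omega
      · subst ha'; exact absurd hab.symm (hcon b (by omega))
      · subst hb'; exact absurd hab (hcon a (by omega))
      · exact hv (by simp; omega) (by simp; omega) hab
    · intro a ha b hb hab
      simp only [Finset.coe_range, Set.mem_Iio] at ha hb
      by_cases ha' : a = n + 1 <;> by_cases hb' : b = n + 1
      · omega
      · subst ha'; rw [Function.update_self, Function.update_of_ne hb'] at hab
        exact absurd hab.symm (hx.2 b (by omega))
      · subst hb'; rw [Function.update_self, Function.update_of_ne ha'] at hab
        exact absurd hab (hx.2 a (by omega))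
      · rw [Function.update_of_ne ha', Function.update_of_ne hb'] at hab
        exact he (by simp; omega) (by simp; omega) hab
    · intro i hi
      by_cases hi' : i = n + 1
      · subst hi'; rw [Function.update_self]; exact hx.1
      · rw [Function.update_of_ne hi']; exact hmem i (by omega)
    · intro i hi
      by_cases hi' : i = n + 1
      · subst hi'; rw [Function.update_self, Function.update_self, Function.update_of_ne (by omega)]; exact hw
      · rw [Function.update_of_ne hi', Function.update_of_ne (by omega), Function.update_of_ne (by omega)]
        exact hends i (by omega)
  have hle2 : ∀ u, ∑ x ∈ CE, edgeCount (ends x) u ≤ 2 := by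
    intro u; rcases hdeg u with h | h <;> omega
  have hclose : v (n+1) = v 0 := by
    obtain ⟨i, hi, hvi⟩ := hvis
    rcases Nat.eq_zero_or_pos i with h0 | h0
    · rw [← hvi, h0]
    · exfalso
      have h := hsplit (v (n+1))
      have h1 : 1 ≤ ∑ i ∈ Finset.range (n+1), (if v i = v (n+1) then 1 else 0) := by
        have := Finset.single_le_sum (f := fun i => if v i = v (n+1) then 1 else 0) (s := Finset.range (n+1))
          (fun _ _ => Nat.zero_le _) (Finset.mem_range.2 hi)
        simpa [hvi] using this
      have h2 : 2 ≤ ∑ i ∈ Finset.range (n+1), (if v (i+1) = v (n+1) then 1 else 0) := by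
        rw [Finset.sum_range_succ, if_pos rfl]
        have := Finset.single_le_sum (f := fun i => if v (i+1) = v (n+1) then 1 else 0) (s := Finset.range n)
          (fun _ _ => Nat.zero_le _) (Finset.mem_range.2 (by omega : i - 1 < n))
        simp only [Nat.sub_add_cancel h0, hvi, if_true] at this
        omega
      have := hle2 (v (n+1))
      omega
  have hfull : ∀ u, (∃ i < n + 1, v i = u) → ∀ x ∈ CE, u ∈ ends x → x ∈ (Finset.range (n+1)).image e := by
    rintro u ⟨i, hi, rfl⟩ x hx hux
    by_contra hxn
    have h := hsplit (v i)
    have h1 : 1 ≤ ∑ k ∈ Finset.range (n+1), (if v k = v i then 1 else 0) := by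
      have := Finset.single_le_sum (f := fun k => if v k = v i then 1 else 0) (s := Finset.range (n+1))
        (fun _ _ => Nat.zero_le _) (Finset.mem_range.2 hi)
      simpa using this
    have h2 : ∑ k ∈ Finset.range (n+1), (if v (k+1) = v i then 1 else 0) =
        ∑ k ∈ Finset.range (n+1), (if v k = v i then 1 else 0) := by
      rw [Finset.sum_range_succ, Finset.sum_range_succ', hclose]
    have h3 : 1 ≤ ∑ x ∈ CE \ (Finset.range (n+1)).image e, edgeCount (ends x) (v i) := by
      have := Finset.single_le_sum (f := fun x => edgeCount (ends x) (v i)) (s := CE \ (Finset.range (n+1)).image e)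
        (fun _ _ => Nat.zero_le _) (Finset.mem_sdiff.2 ⟨hx, hxn⟩)
      have h4 := (edgeCount_pos (ends x) (v i)).2 hux
      omega
    have := hle2 (v i)
    omega
  have himg : (Finset.range (n+1)).image e = CE := by
    apply Finset.Subset.antisymm hsub
    intro x hx
    have hr := hconn (e 0) (hmem 0 (by omega)) x hx
    clear hx
    induction hr with
    | refl => exact Finset.mem_image_of_mem e (by simp)
    | tail _ hstep ih =>
      obtain ⟨u, hu1, hu2, _, hb⟩ := hstep
      obtain ⟨i, hi, rfl⟩ := Finset.mem_image.1 ih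
      rw [Finset.mem_range] at hi
      rw [hends i hi, Sym2.mem_iff] at hu1
      refine hfull u ?_ _ hb hu2
      rcases hu1 with h | h
      · exact ⟨i, hi, h.symm⟩
      · by_cases hin : i = n
        · exact ⟨0, by omega, by rw [h, hin, hclose]⟩
        · exact ⟨i+1, by omega, h.symm⟩
  have hcard : CE.card = n + 1 := by
    rw [← himg, Finset.card_image_of_injOn he, Finset.card_range]
  rw [hcard]
  exact ⟨v, e, hclose, hv, he, himg, hends⟩
lemma z2_abc (a b c : Z2) : a + b + (a + c + (b + c)) = 0 := by
  revert a b c; decide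

lemma z2_shift (x y a b : Z2) : (x + a = 0 ∧ y + b = 0) ↔ (x = a ∧ y = b) := by
  revert x y a b; decide


/-- The `ZMod 2` boundary map. -/
noncomputable def bd {V E : Type} [Fintype E] [DecidableEq V] (D : E → V × V) : (E → Z2) →ₗ[Z2] (V → Z2) :=
  Fintype.linearCombination Z2 (fun e => (Pi.single (D e).1 1 + Pi.single (D e).2 1 : V → Z2))

lemma bd_apply {V E : Type} [Fintype E] [DecidableEq V] (D : E → V × V) (h : E → Z2) :
    bd D h = ∑ e, h e • (Pi.single (D e).1 1 + Pi.single (D e).2 1 : V → Z2) := by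
  simp [bd, Fintype.linearCombination_apply]

lemma bd_apply_vertex {V E : Type} [Fintype E] [DecidableEq V] (D : E → V × V) (h : E → Z2) (v : V) :
    bd D h v = ∑ e, h e * ((if (D e).1 = v then 1 else 0) + (if (D e).2 = v then 1 else 0)) := by
  rw [bd_apply, Finset.sum_apply]
  apply Finset.sum_congr rfl
  intro e _
  simp only [Pi.smul_apply, Pi.add_apply, smul_eq_mul, Pi.single_apply, eq_comm (a := v)]

lemma bd_single {V E : Type} [Fintype E] [DecidableEq V] [DecidableEq E] (D : E → V × V) (e : E) :
    bd D (Pi.single e 1) = Pi.single (D e).1 1 + Pi.single (D e).2 1 := by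
  simp [bd, Fintype.linearCombination_apply_single]

/-- Chains supported on `Q`. -/
def chains {E : Type} (Q : E → Prop) : Submodule Z2 (E → Z2) where
  carrier := {h | ∀ e, ¬ Q e → h e = 0}
  add_mem' := by
    intro a b ha hb e he
    simp [ha e he, hb e he]
  zero_mem' := by intro e _; rfl
  smul_mem' := by
    intro c a ha e he
    simp [ha e he]

lemma pairing {V E : Type} [Fintype V] [Fintype E] [DecidableEq V] [DecidableEq E] (D : E → V × V)
    (Q : E → Prop) (v : ℕ → V) : ∀ (N : ℕ) (T : Finset ℕ), T.card = N → Set.InjOn v T →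
    (∑ i ∈ T, (Pi.single (v i) 1 : V → Z2)) ∈ (chains Q).map (bd D) →
    ∃ m : ℕ → ℕ, ∀ i ∈ T, m i ∈ T ∧ m i ≠ i ∧ m (m i) = i ∧
      (Pi.single (v i) 1 + Pi.single (v (m i)) 1 : V → Z2) ∈ (chains Q).map (bd D) := by
  classical
  intro N
  induction N using Nat.strong_induction_on with
  | _ N IH =>
  intro T hN hinj hmem
  rcases T.eq_empty_or_nonempty with rfl | ⟨u, hu⟩
  · exact ⟨id, by simp⟩
  set W := (chains Q).map (bd D) with hW
  have hself : ∀ x : V → Z2, x + x = 0 := fun x => by ext w; exact z2_add_self _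
  have hex : ∃ j ∈ T, j ≠ u ∧ (Pi.single (v u) 1 + Pi.single (v j) 1 : V → Z2) ∈ W := by
    by_contra hcon
    push Not at hcon
    let K : V → Z2 := fun w => if (Pi.single (v u) 1 + Pi.single w 1 : V → Z2) ∈ W then 1 else 0
    let ℓ : (V → Z2) →ₗ[Z2] Z2 := Fintype.linearCombination Z2 K
    have hℓs : ∀ w, ℓ (Pi.single w 1) = K w := by
      intro w
      simp [ℓ, Fintype.linearCombination_apply_single]
    have hedge : ∀ e, Q e → K (D e).1 = K (D e).2 := by
      intro e he
      have h1 : (Pi.single (D e).1 1 + Pi.single (D e).2 1 : V → Z2) ∈ W := by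
        rw [← bd_single]
        apply Submodule.mem_map_of_mem
        intro e' he'
        rw [Pi.single_apply, if_neg]
        rintro rfl
        exact he' he
      have h2 : (Pi.single (v u) 1 + Pi.single (D e).1 1 : V → Z2) ∈ W ↔
          (Pi.single (v u) 1 + Pi.single (D e).2 1 : V → Z2) ∈ W := by
        have key := hself (Pi.single (D e).1 1 : V → Z2)
        have key2 := hself (Pi.single (D e).2 1 : V → Z2)
        constructor
        · intro h
          have := W.add_mem h h1
          convert this using 1
          linear_combination -key
        · intro h
          have := W.add_mem h h1
          convert this using 1
          linear_combination -key2
      simp only [K, h2]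
    have hz : ∀ g ∈ W, ℓ g = 0 := by
      rintro g ⟨h, hh, rfl⟩
      rw [bd_apply, map_sum]
      apply Finset.sum_eq_zero
      intro e _
      rw [map_smul, map_add, hℓs, hℓs]
      by_cases he : Q e
      · rw [hedge e he, z2_add_self, smul_zero]
      · rw [hh e he, zero_smul]
    have h0 := hz _ hmem
    rw [map_sum, Finset.sum_eq_single u] at h0
    · rw [hℓs] at h0
      simp only [K] at h0
      rw [if_pos (by rw [hself]; exact W.zero_mem)] at h0
      exact one_ne_zero h0
    · intro j hj hju
      rw [hℓs]
      simp only [K]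
      rw [if_neg (hcon j hj hju)]
    · intro h; exact absurd hu h
  obtain ⟨j, hj, hju, hjW⟩ := hex
  have hj' : j ∈ T.erase u := by simp [hj, hju]
  have hc : ((T.erase u).erase j).card < N := by
    rw [Finset.card_erase_of_mem hj', Finset.card_erase_of_mem hu]
    have := Finset.card_pos.2 ⟨u, hu⟩
    omega
  obtain ⟨m, hm⟩ := IH _ hc ((T.erase u).erase j) rfl
    (hinj.mono (by intro x hx; exact Finset.mem_of_mem_erase (Finset.mem_of_mem_erase hx))) (by
      rw [← Finset.add_sum_erase T _ hu, ← Finset.add_sum_erase _ _ hj', ← add_assoc] at hmem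
      exact (W.add_mem_iff_right hjW).1 hmem)
  refine ⟨Function.update (Function.update m u j) j u, ?_⟩
  intro i hi
  by_cases h1 : i = j
  · subst h1
    rw [Function.update_self, Function.update_of_ne hju.symm, Function.update_self]
    exact ⟨hu, hju.symm, rfl, by rw [add_comm]; exact hjW⟩
  by_cases h2 : i = u
  · subst h2
    rw [Function.update_of_ne h1, Function.update_self, Function.update_self]
    exact ⟨hj, hju, rfl, hjW⟩
  obtain ⟨a1, a2, a3, a4⟩ := hm i (by simp [h1, h2, hi])
  simp only [Finset.mem_erase] at a1
  rw [Function.update_of_ne h1, Function.update_of_ne h2, Function.update_of_ne a1.1,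
    Function.update_of_ne a1.2.1]
  exact ⟨a1.2.2, a2, a3, a4⟩

lemma cyc_shift {M : Type} [AddCommGroup M] [Module Z2 M] (L : ℕ) (x : ℕ → Z2) (d : ℕ → M)
    (hL : 0 < L) (hd : d L = d 0) :
    ∑ j ∈ Finset.range L, x j • d (j+1) =
      ∑ i ∈ Finset.range L, x (if i = 0 then L - 1 else i - 1) • d i := by
  obtain ⟨n, rfl⟩ : ∃ n, L = n + 1 := ⟨L - 1, by omega⟩
  rw [Finset.sum_range_succ, Finset.sum_range_succ', hd]
  simp

lemma tog_add (L : ℕ) (x y : ℕ → Z2) (i : ℕ) :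
    tog L (fun j => x j + y j) i = tog L x i + tog L y i := by
  simp only [tog]; ring

lemma tog_sumf (L : ℕ) (S : Finset ℕ) (x : ℕ → ℕ → Z2) (i : ℕ) :
    tog L (fun j => ∑ k ∈ S, x k j) i = ∑ k ∈ S, tog L (x k) i := by
  simp only [tog, Finset.sum_add_distrib]

lemma tog_chordInd (L : ℕ) (m : ℕ → ℕ) (k i : ℕ) (hk : k < L) (hm : m k < L) :
    tog L (chordInd m k) i = (if k = i then 1 else 0) + (if m k = i then 1 else 0) := by
  have aux : ∀ k, k < L → (if k ≤ i then (1:Z2) else 0) + (if k ≤ (if i = 0 then L - 1 else i - 1) then 1 else 0)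
      = (if k = i then 1 else 0) + (if i = 0 then 1 else 0) := by
    intro k hk
    by_cases h0 : i = 0
    · subst h0
      simp only [if_true]
      rw [if_pos (by omega : k ≤ L - 1)]
      by_cases h : k = 0 <;> simp [h]
    · rw [if_neg h0, if_neg h0]
      rcases lt_trichotomy k i with h | h | h
      · rw [if_pos (by omega), if_pos (by omega), if_neg (by omega)]; decide
      · rw [if_pos (by omega), if_neg (by omega), if_pos h]
      · rw [if_neg (by omega), if_neg (by omega), if_neg (by omega)]
  have h1 := aux k hk
  have h2 := aux (m k) hm
  have h3 := z2_add_self (if i = 0 then (1:Z2) else 0)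
  simp only [tog, chordInd]
  linear_combination h1 + h2 + h3

section
variable {V E : Type} [Fintype V] [Fintype E] [DecidableEq V] [DecidableEq E]

/-- A pair of `ZMod 2`-flows whose supports jointly cover all edges off `CE`. -/
def Good (D : E → V × V) (CE : Finset E) (φ β : E → Z2) : Prop :=
  bd D φ = 0 ∧ bd D β = 0 ∧ ∀ x, x ∉ CE → φ x = 1 ∨ β x = 1

/-- A cyclic enumeration of the circuit `CE`. -/
structure Enum (D : E → V × V) (CE : Finset E) (L : ℕ) (v : ℕ → V) (e : ℕ → E) : Prop where
  pos : 0 < L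
  close : v L = v 0
  vinj : Set.InjOn v (Finset.range L)
  einj : Set.InjOn e (Finset.range L)
  img : (Finset.range L).image e = CE
  bds : ∀ i < L, bd D (Pi.single (e i) 1) = Pi.single (v i) 1 + Pi.single (v (i+1)) 1

/-- The tail of the circuit starting at position `i`. -/
def tail (L : ℕ) (e : ℕ → E) (i : ℕ) : E → Z2 :=
  ∑ j ∈ Finset.range L, (if i ≤ j then (1 : Z2) else 0) • (Pi.single (e j) 1 : E → Z2)

variable {D : E → V × V} {CE : Finset E} {L : ℕ} {v : ℕ → V} {e : ℕ → E}

lemma Enum.mem (hE : Enum D CE L v e) {i : ℕ} (hi : i < L) : e i ∈ CE := by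
  rw [← hE.img]; exact Finset.mem_image_of_mem _ (by simpa using hi)

lemma Enum.tail_e (hE : Enum D CE L v e) (i k : ℕ) (hk : k < L) :
    tail L e i (e k) = if i ≤ k then 1 else 0 := by
  simp only [tail, Finset.sum_apply, Pi.smul_apply, smul_eq_mul]
  rw [Finset.sum_eq_single k]
  · simp
  · intro j hj hjk
    have h : e k ≠ e j := fun h => hjk (hE.einj hj (by simpa using hk) h.symm)
    rw [Pi.single_apply (e j), if_neg h, mul_zero]
  · intro h; exact absurd (Finset.mem_range.2 hk) h

lemma Enum.tail_off (hE : Enum D CE L v e) (i : ℕ) (x : E) (hx : x ∉ CE) :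
    tail L e i x = 0 := by
  simp only [tail, Finset.sum_apply, Pi.smul_apply, smul_eq_mul]
  apply Finset.sum_eq_zero
  intro j hj
  have h : x ≠ e j := by rintro rfl; exact hx (hE.mem (by simpa using hj))
  rw [Pi.single_apply (e j), if_neg h, mul_zero]

lemma Enum.bd_tail (hE : Enum D CE L v e) (i : ℕ) (hi : i < L) :
    bd D (tail L e i) = Pi.single (v i) 1 + Pi.single (v 0) 1 := by
  have key : ∀ n, i ≤ n → n < L → bd D (∑ j ∈ Finset.range (n+1), (if i ≤ j then (1 : Z2) else 0) •
      (Pi.single (e j) 1 : E → Z2)) = Pi.single (v i) 1 + Pi.single (v (n+1)) 1 := by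
    intro n hn
    induction n, hn using Nat.le_induction with
    | base =>
      intro h
      rw [Finset.sum_range_succ, Finset.sum_eq_zero, zero_add, if_pos le_rfl, one_smul, hE.bds _ h]
      intro j hj
      rw [if_neg (by simp at hj; omega), zero_smul]
    | succ n hn ih =>
      intro h
      rw [Finset.sum_range_succ, map_add, ih (by omega), if_pos (by omega), one_smul, hE.bds _ h]
      have : (Pi.single (v (n+1)) 1 + Pi.single (v (n+1)) 1 : V → Z2) = 0 := by
        ext w; exact z2_add_self _
      linear_combination this
  have := key (L-1) (by omega) (by omega)
  rw [Nat.sub_add_cancel hE.pos, hE.close] at this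
  exact this

lemma switch (hE : Enum D CE L v e) (φ β : E → Z2) (hg : Good D CE φ β) :
    ∃ m : ℕ → ℕ, (∀ i ∈ (Finset.range L).filter (fun i => tog L (fun j => φ (e j)) i = 1),
        i < L ∧ m i ∈ (Finset.range L).filter (fun i => tog L (fun j => φ (e j)) i = 1) ∧ m i ≠ i ∧ m (m i) = i) ∧
      ∀ S ⊆ (Finset.range L).filter (fun i => tog L (fun j => φ (e j)) i = 1),
        ∃ β' : E → Z2, Good D CE φ β' ∧ ∀ j < L, β' (e j) = β (e j) + ∑ i ∈ S, chordInd m i j := by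
  set T := (Finset.range L).filter (fun i => tog L (fun j => φ (e j)) i = 1) with hT
  set Q : E → Prop := fun x => x ∉ CE ∧ φ x = 1 with hQ
  have hTW : (∑ i ∈ T, (Pi.single (v i) 1 : V → Z2)) ∈ (chains Q).map (bd D) := by
    refine ⟨fun x => if x ∈ CE then 0 else φ x, ?_, ?_⟩
    · intro x hx
      dsimp only
      split_ifs with h
      · rfl
      · rcases z2_cases (φ x) with h' | h'
        · exact h'
        · exact absurd ⟨h, h'⟩ hx
    · have hdec : φ = (fun x => if x ∈ CE then 0 else φ x) +
          ∑ j ∈ Finset.range L, φ (e j) • (Pi.single (e j) 1 : E → Z2) := by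
        ext x
        simp only [Pi.add_apply, Finset.sum_apply, Pi.smul_apply, smul_eq_mul]
        by_cases hx : x ∈ CE
        · rw [if_pos hx, zero_add]
          rw [← hE.img] at hx
          obtain ⟨k, hk, rfl⟩ := Finset.mem_image.1 hx
          rw [Finset.sum_eq_single k]
          · simp
          · intro j hj hjk
            rw [Pi.single_apply, if_neg, mul_zero]
            intro h
            exact hjk (hE.einj hj hk h.symm)
          · intro h; exact absurd hk h
        · rw [if_neg hx, Finset.sum_eq_zero, add_zero]
          intro j hj
          rw [Pi.single_apply, if_neg, mul_zero]
          rintro rfl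
          exact hx (hE.mem (by simpa using hj))
      have h0 := hg.1
      rw [hdec, map_add] at h0
      have h1 : bd D (∑ j ∈ Finset.range L, φ (e j) • (Pi.single (e j) 1 : E → Z2)) =
          ∑ i ∈ T, (Pi.single (v i) 1 : V → Z2) := by
        rw [map_sum]
        have : ∀ j ∈ Finset.range L, bd D (φ (e j) • (Pi.single (e j) 1 : E → Z2)) =
            φ (e j) • (Pi.single (v j) 1 : V → Z2) + φ (e j) • (Pi.single (v (j+1)) 1 : V → Z2) := by
          intro j hj
          rw [map_smul, hE.bds j (by simpa using hj), smul_add]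
        rw [Finset.sum_congr rfl this, Finset.sum_add_distrib,
          cyc_shift L (fun j => φ (e j)) (fun j => (Pi.single (v j) 1 : V → Z2)) hE.pos (by rw [hE.close]),
          ← Finset.sum_add_distrib, hT, Finset.sum_filter]
        apply Finset.sum_congr rfl
        intro i _
        rw [← add_smul]
        change tog L (fun j => φ (e j)) i • _ = _
        rcases z2_cases (tog L (fun j => φ (e j)) i) with h | h <;> simp [h]
      rw [h1] at h0
      have h2 : (∑ i ∈ T, (Pi.single (v i) 1 : V → Z2)) + ∑ i ∈ T, (Pi.single (v i) 1 : V → Z2) = 0 := by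
        ext w; exact z2_add_self _
      exact add_right_cancel (h0.trans h2.symm)
  obtain ⟨m, hm⟩ := pairing D Q v T.card T rfl
    (hE.vinj.mono (by intro x hx; exact (Finset.mem_filter.1 hx).1)) hTW
  have hTL : ∀ i ∈ T, i < L := fun i hi => Finset.mem_range.1 (Finset.mem_filter.1 hi).1
  refine ⟨m, fun i hi => ⟨hTL i hi, (hm i hi).1, (hm i hi).2.1, (hm i hi).2.2.1⟩, ?_⟩
  have hch : ∀ i ∈ T, ∃ p : E → Z2, p ∈ chains Q ∧ bd D p = Pi.single (v i) 1 + Pi.single (v (m i)) 1 := by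
    intro i hi
    obtain ⟨p, hp, hp'⟩ := (hm i hi).2.2.2
    exact ⟨p, hp, hp'⟩
  choose! p hp hpb using hch
  intro S hS
  refine ⟨β + ∑ i ∈ S, (p i + (tail L e i + tail L e (m i))), ⟨hg.1, ?_, ?_⟩, ?_⟩
  · rw [map_add, hg.2.1, zero_add, map_sum]
    apply Finset.sum_eq_zero
    intro i hi
    have hi' := hS hi
    rw [map_add, map_add, hpb i hi', hE.bd_tail i (hTL i hi'), hE.bd_tail (m i) (hTL _ (hm i hi').1)]
    ext w
    simp only [Pi.add_apply, Pi.zero_apply]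
    exact z2_abc _ _ _
  · intro x hx
    rcases z2_cases (φ x) with h | h
    · right
      have hb : β x = 1 := by
        rcases hg.2.2 x hx with h' | h'
        · rw [h] at h'; exact absurd h' (by decide)
        · exact h'
      rw [Pi.add_apply, hb, Finset.sum_apply, Finset.sum_eq_zero, add_zero]
      intro i hi
      have : p i x = 0 := hp i (hS hi) x (by rintro ⟨_, h'⟩; rw [h] at h'; exact absurd h' (by decide))
      simp [this, hE.tail_off _ x hx]
    · left; exact h
  · intro j hj
    rw [Pi.add_apply, Finset.sum_apply]
    congr 1
    apply Finset.sum_congr rfl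
    intro i hi
    have : p i (e j) = 0 := hp i (hS hi) (e j) (by rintro ⟨h', _⟩; exact h' (hE.mem hj))
    simp [this, hE.tail_e _ _ hj, chordInd]

lemma good_shift (hE : Enum D CE L v e) (φ β : E → Z2) (hg : Good D CE φ β) (a b : Z2) :
    ∃ φ' β', Good D CE φ' β' ∧ ∀ j < L, φ' (e j) = φ (e j) + a ∧ β' (e j) = β (e j) + b := by
  have hb0 : bd D (tail L e 0) = 0 := by
    rw [hE.bd_tail 0 hE.pos]; ext w; exact z2_add_self _
  refine ⟨φ + a • tail L e 0, β + b • tail L e 0, ⟨?_, ?_, ?_⟩, ?_⟩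
  · rw [map_add, map_smul, hb0, hg.1]; simp
  · rw [map_add, map_smul, hb0, hg.2.1]; simp
  · intro x hx
    simpa [hE.tail_off 0 x hx] using hg.2.2 x hx
  · intro j hj
    simp [hE.tail_e 0 j hj]

lemma balanced (hE : Enum D CE L v e)
    (hall : ∀ φ β, Good D CE φ β →
      L ≤ 4 * ((Finset.range L).filter (fun j => φ (e j) = 0 ∧ β (e j) = 0)).card)
    (φ β : E → Z2) (hg : Good D CE φ β) (c : Z2) :
    ((Finset.range L).filter (fun j => φ (e j) = c ∧ β (e j) = 0)).card =
    ((Finset.range L).filter (fun j => φ (e j) = c ∧ β (e j) = 1)).card := by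
  have hge : ∀ a b : Z2, L ≤ 4 * ((Finset.range L).filter (fun j => φ (e j) = a ∧ β (e j) = b)).card := by
    intro a b
    obtain ⟨φ', β', hg', h'⟩ := good_shift hE φ β hg a b
    refine (hall φ' β' hg').trans (le_of_eq ?_)
    congr 2
    apply Finset.filter_congr
    intro j hj
    rw [(h' j (by simpa using hj)).1, (h' j (by simpa using hj)).2]
    exact z2_shift _ _ _ _
  have hsum : ((Finset.range L).filter (fun j => φ (e j) = 0 ∧ β (e j) = 0)).card +
      ((Finset.range L).filter (fun j => φ (e j) = 0 ∧ β (e j) = 1)).card +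
      (((Finset.range L).filter (fun j => φ (e j) = 1 ∧ β (e j) = 0)).card +
      ((Finset.range L).filter (fun j => φ (e j) = 1 ∧ β (e j) = 1)).card) = L := by
    simp only [Finset.card_filter, ← Finset.sum_add_distrib]
    conv_rhs => rw [← Finset.card_range L, Finset.card_eq_sum_ones]
    apply Finset.sum_congr rfl
    intro j _
    generalize φ (e j) = x
    generalize β (e j) = y
    revert x y; decide
  have h1 := hge 0 0
  have h2 := hge 0 1
  have h3 := hge 1 0
  have h4 := hge 1 1
  rcases z2_cases c with rfl | rfl <;> omega

lemma z2_tog (a b : Z2) : (a + b = 0 ∧ b = 1) → a = 1 ∧ b = 1 := by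
  revert a b; decide

/-- The main argument. -/
lemma main_z2 (hE : Enum D CE L v e) (φ₀ β₀ : E → Z2) (hg₀ : Good D CE φ₀ β₀) :
    ∃ φ β, Good D CE φ β ∧
      4 * ((Finset.range L).filter (fun j => φ (e j) = 0 ∧ β (e j) = 0)).card < L := by
  classical
  by_contra hcon
  push Not at hcon
  -- minimize the number of positions with pure β-toggle
  have hex : ∃ t φ β, Good D CE φ β ∧ ((Finset.range L).filter (fun i =>
      tog L (fun j => φ (e j)) i = 0 ∧ tog L (fun j => β (e j)) i = 1)).card = t :=
    ⟨_, φ₀, β₀, hg₀, rfl⟩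
  obtain ⟨φ, β, hg, ht⟩ := Nat.find_spec hex
  have hmin : ∀ φ' β', Good D CE φ' β' → Nat.find hex ≤ ((Finset.range L).filter (fun i =>
      tog L (fun j => φ' (e j)) i = 0 ∧ tog L (fun j => β' (e j)) i = 1)).card := by
    intro φ' β' h'
    exact Nat.find_min' hex ⟨φ', β', h', rfl⟩
  rw [← ht] at hmin
  clear ht hex
  obtain ⟨m, hm, hsw⟩ := switch hE φ β hg
  set T := (Finset.range L).filter (fun i => tog L (fun j => φ (e j)) i = 1) with hT
  have hcl := coreB L T m (fun j => φ (e j)) (fun j => β (e j)) (by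
    intro S hS c
    obtain ⟨β', hg', hβ'⟩ := hsw S hS
    have hb := balanced hE hcon φ β' hg' c
    rw [Finset.filter_filter, Finset.filter_filter]
    convert hb using 2
    · apply Finset.filter_congr
      intro j hj
      rw [hβ' j (by simpa using hj)]
    · apply Finset.filter_congr
      intro j hj
      rw [hβ' j (by simpa using hj)])
  have hA := coreA L hE.pos m T.card T (fun j => β (e j)) rfl hm hcl
  have hteq : (Finset.range L).filter (fun i => i ∉ T ∧ tog L (fun j => β (e j)) i = 1) =
      (Finset.range L).filter (fun i =>
      tog L (fun j => φ (e j)) i = 0 ∧ tog L (fun j => β (e j)) i = 1) := by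
    apply Finset.filter_congr
    intro i hi
    simp only [hT, Finset.mem_filter, hi, true_and]
    rcases z2_cases (tog L (fun j => φ (e j)) i) with h | h <;> simp [h]
  rw [hteq] at hA
  set S := T.filter (fun k => k < m k ∧ tog L (fun j => β (e j)) k = 1 ∧ tog L (fun j => β (e j)) (m k) = 1) with hS
  obtain ⟨β', hg', hβ'⟩ := hsw S (Finset.filter_subset _ _)
  have hgood : Good D CE (φ + β') β' := by
    refine ⟨by rw [map_add, hg'.1, hg'.2.1, add_zero], hg'.2.1, ?_⟩
    intro x hx
    have := hg'.2.2 x hx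
    rw [Pi.add_apply]
    generalize φ x = a at *
    generalize β' x = b at *
    clear * - this
    revert a b; decide
  have hle := hmin _ _ hgood
  have htogβ' : ∀ i < L, tog L (fun j => β' (e j)) i =
      tog L (fun j => β (e j)) i + ∑ k ∈ S, ((if k = i then 1 else 0) + (if m k = i then 1 else 0)) := by
    intro i hi
    have h1 : tog L (fun j => β' (e j)) i = tog L (fun j => β (e j) + ∑ k ∈ S, chordInd m k j) i := by
      simp only [tog]
      rw [hβ' i hi, hβ' _ (by split_ifs <;> omega)]
    rw [h1, tog_add, tog_sumf]
    congr 1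
    apply Finset.sum_congr rfl
    intro k hk
    have hkT := (Finset.mem_filter.1 hk).1
    exact tog_chordInd L m k i (hm k hkT).1 (hm _ (hm k hkT).2.1).1
  have hsub : (Finset.range L).filter (fun i => tog L (fun j => (φ + β') (e j)) i = 0 ∧
      tog L (fun j => β' (e j)) i = 1) ⊆
      T.filter (fun j => tog L (fun j => β (e j)) j = 1 ∧ tog L (fun j => β (e j)) (m j) = 0) := by
    intro i hi
    rw [Finset.mem_filter] at hi
    obtain ⟨hiL, h1, h2⟩ := hi
    have h3 := z2_tog _ _ ⟨(tog_add L (fun j => φ (e j)) (fun j => β' (e j)) i).symm.trans h1, h2⟩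
    have hiT : i ∈ T := by simp only [hT, Finset.mem_filter]; exact ⟨hiL, h3.1⟩
    obtain ⟨_, hmT, hmne, hmm⟩ := hm i hiT
    rw [htogβ' i (by simpa using hiL), Finset.sum_add_distrib] at h2
    have hs1 : ∑ k ∈ S, (if k = i then (1:Z2) else 0) = if i ∈ S then 1 else 0 := by
      rw [Finset.sum_ite_eq']
    have hs2 : ∑ k ∈ S, (if m k = i then (1:Z2) else 0) = if m i ∈ S then 1 else 0 := by
      rw [← Finset.sum_ite_eq' S (m i) (fun _ => (1:Z2))]
      apply Finset.sum_congr rfl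
      intro k hk
      have hkT := (Finset.mem_filter.1 hk).1
      have : m k = i ↔ k = m i := by
        constructor
        · rintro rfl; exact (hm k hkT).2.2.2.symm
        · rintro rfl; exact hmm
      simp only [this]
    rw [hs1, hs2] at h2
    have hiS : i ∈ S ↔ i < m i ∧ tog L (fun j => β (e j)) i = 1 ∧ tog L (fun j => β (e j)) (m i) = 1 := by
      simp only [hS, Finset.mem_filter, hiT, true_and]
    have hmiS : m i ∈ S ↔ m i < i ∧ tog L (fun j => β (e j)) (m i) = 1 ∧ tog L (fun j => β (e j)) i = 1 := by
      simp only [hS, Finset.mem_filter, hmT, true_and, hmm]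
    rw [Finset.mem_filter]
    refine ⟨hiT, ?_⟩
    simp only [hiS, hmiS] at h2
    rcases z2_cases (tog L (fun j => β (e j)) i) with a | a <;>
      rcases z2_cases (tog L (fun j => β (e j)) (m i)) with b | b <;>
      simp only [a, b] at h2 ⊢
    · simp at h2
    · simp at h2
    · simp
    · exfalso
      rcases lt_or_gt_of_ne hmne with h | h
      · rw [if_neg (by simp; omega), if_pos (by simp [h])] at h2
        exact absurd h2 (by decide)
      · rw [if_pos (by simp [h]), if_neg (by simp; omega)] at h2
        exact absurd h2 (by decide)
  have := Finset.card_le_card hsub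
  omega

end

lemma z2_flow_of_int {V E : Type} [Fintype E] [DecidableEq V] (D : E → V × V) (b : E → ℤ)
    (hb : ∀ v, ∑ e, b e * ((if (D e).1 = v then (1 : ℤ) else 0) - (if (D e).2 = v then 1 else 0)) = 0) :
    bd D (fun e => (b e : Z2)) = 0 := by
  ext v
  rw [bd_apply_vertex, Pi.zero_apply]
  have := congrArg (fun z : ℤ => (z : Z2)) (hb v)
  push_cast at this
  refine Eq.trans (Finset.sum_congr rfl ?_) this
  intro e _
  rw [sub_eq_add_neg, ZMod.neg_eq_self_mod_two]

lemma int_flow_of_z2 {V E : Type} [Fintype E] [DecidableEq V] [DecidableEq E] (D : E → V × V) (φ : E → Z2)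
    (hφ : bd D φ = 0) :
    ∃ h : E → ℤ, (∀ e, φ e = 1 → h e = 1 ∨ h e = -1) ∧ (∀ e, φ e = 0 → h e = 0) ∧
      ∀ v, ∑ e, h e * ((if (D e).1 = v then (1 : ℤ) else 0) - (if (D e).2 = v then 1 else 0)) = 0 := by
  obtain ⟨h, h1, h2, h3⟩ := euler _ (Finset.univ.filter (fun e => φ e = 1)) D rfl (by
    intro v
    have := congrFun hφ v
    rw [bd_apply_vertex, Pi.zero_apply] at this
    rw [Finset.sum_filter]
    refine Eq.trans (Finset.sum_congr rfl ?_) this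
    intro e _
    rcases z2_cases (φ e) with h | h <;> simp [h])
  refine ⟨h, fun e he => h1 e (by simp [he]), fun e he => h2 e (by simp [he]), ?_⟩
  intro v
  refine Eq.trans (Finset.sum_subset (Finset.subset_univ _) ?_).symm (h3 v)
  intro e _ he
  rw [h2 e he, zero_mul]

lemma cons_iff {V E : Type} [Fintype E] [DecidableEq V] (D : E → V × V) (f : E → ℤ) (v : V) :
    (∑ e ∈ Finset.univ.filter (fun e => (D e).1 = v), f e =
      ∑ e ∈ Finset.univ.filter (fun e => (D e).2 = v), f e) ↔
    ∑ e, f e * ((if (D e).1 = v then (1 : ℤ) else 0) - (if (D e).2 = v then 1 else 0)) = 0 := by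
  simp only [mul_sub, Finset.sum_sub_distrib, mul_ite, mul_one, mul_zero, sub_eq_zero, Finset.sum_filter]

/-- Theorem 1.4: if `|E(C)| ≤ 35` and `G` has a 4-flow `(D,f)`
with `E(G) − E(C) ⊆ supp(f)`, then `G` has a 4-flow `(D,g)` with
`E(G) − E(C) ⊆ supp(g)` and `|E_{g=0}(C)| < |E(C)|/4`. -/
theorem fan_conjecture_35_int {V E : Type} [Fintype V] [Fintype E] [DecidableEq V]
    (ends : E → Sym2 V) (CE : Finset E) (hC : IsCircuit ends CE)
    (h35 : CE.card ≤ 35)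
    (D : E → V × V) (hD : ∀ e, s((D e).1, (D e).2) = ends e)
    (f : E → ℤ) (hf4 : ∀ e, |f e| < 4)
    (hcons : ∀ v : V, ∑ e ∈ Finset.univ.filter (fun e => (D e).1 = v), f e =
                      ∑ e ∈ Finset.univ.filter (fun e => (D e).2 = v), f e)
    (hsupp : ∀ e, e ∉ CE → f e ≠ 0) :
    ∃ g : E → ℤ, (∀ e, |g e| < 4) ∧
      (∀ v : V, ∑ e ∈ Finset.univ.filter (fun e => (D e).1 = v), g e =
                ∑ e ∈ Finset.univ.filter (fun e => (D e).2 = v), g e) ∧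
      (∀ e, e ∉ CE → g e ≠ 0) ∧
      4 * (CE.filter (fun e => g e = 0)).card < CE.card := by
  classical
  obtain ⟨v, e, hclose, hvinj, heinj, himg, hends⟩ := circuit_enum ends CE hC
  have hE : Enum D CE CE.card v e := by
    refine ⟨Finset.card_pos.2 hC.1, hclose, hvinj, heinj, himg, ?_⟩
    intro i hi
    rw [bd_single]
    have h := (hD (e i)).trans (hends i hi)
    rw [Sym2.eq_iff] at h
    rcases h with ⟨h1, h2⟩ | ⟨h1, h2⟩
    · rw [h1, h2]
    · rw [h1, h2, add_comm]
  -- from the integer flow to a pair of `ZMod 2`-flows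
  have hf := fun v => (cons_iff D f v).1 (hcons v)
  have hφ₀ := z2_flow_of_int D f hf
  obtain ⟨h, h1, h2, h3⟩ := int_flow_of_z2 D _ hφ₀
  have hdiv : ∀ x, ∃ b : ℤ, f x = h x + 2 * b := by
    intro x
    rcases z2_cases (f x : Z2) with hx | hx
    · rw [h2 x hx]
      obtain ⟨b, hb⟩ := (ZMod.intCast_zmod_eq_zero_iff_dvd (f x) 2).1 hx
      exact ⟨b, by push_cast at hb; omega⟩
    · have : ((f x - 1 : ℤ) : Z2) = 0 := by push_cast; rw [hx]; decide
      obtain ⟨b, hb⟩ := (ZMod.intCast_zmod_eq_zero_iff_dvd (f x - 1) 2).1 this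
      push_cast at hb
      rcases h1 x hx with hh | hh
      · exact ⟨b, by omega⟩
      · exact ⟨b + 1, by omega⟩
  choose b hb using hdiv
  have hβ₀ : bd D (fun x => (b x : Z2)) = 0 := by
    apply z2_flow_of_int
    intro w
    have e1 := hf w
    have e2 := h3 w
    simp only [hb, add_mul, Finset.sum_add_distrib, e2, zero_add, mul_assoc, ← Finset.mul_sum] at e1
    omega
  have hg₀ : Good D CE (fun x => (f x : Z2)) (fun x => (b x : Z2)) := by
    refine ⟨hφ₀, hβ₀, ?_⟩
    intro x hx
    rcases z2_cases (f x : Z2) with hx1 | hx1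
    · right
      rcases z2_cases (b x : Z2) with hx2 | hx2
      · exfalso
        have hh := h2 x hx1
        have hbx := hb x
        obtain ⟨c, hc⟩ := (ZMod.intCast_zmod_eq_zero_iff_dvd (b x) 2).1 hx2
        push_cast at hc
        have hne := hsupp x hx
        have h4 := abs_lt.1 (hf4 x)
        omega
      · exact hx2
    · left; exact hx1
  obtain ⟨φ, β, hg, hlt⟩ := main_z2 hE _ _ hg₀
  obtain ⟨p, p1, p2, p3⟩ := int_flow_of_z2 D φ hg.1
  obtain ⟨q, q1, q2, q3⟩ := int_flow_of_z2 D β hg.2.1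
  have hcase : ∀ x, |p x + 2 * q x| < 4 ∧ (p x + 2 * q x = 0 ↔ φ x = 0 ∧ β x = 0) := by
    intro x
    rcases z2_cases (φ x) with a | a <;> rcases z2_cases (β x) with c | c
    · simp [p2 x a, q2 x c, a, c]
    · rcases q1 x c with hq | hq <;> simp [p2 x a, hq, c]
    · rcases p1 x a with hp | hp <;> simp [q2 x c, hp, a]
    · rcases p1 x a with hp | hp <;> rcases q1 x c with hq | hq <;> simp [hp, hq, a]
  refine ⟨fun x => p x + 2 * q x, fun x => (hcase x).1, ?_, ?_, ?_⟩
  · intro w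
    rw [cons_iff]
    simp only [add_mul, Finset.sum_add_distrib, p3, zero_add, mul_assoc, ← Finset.mul_sum, q3, mul_zero]
  · intro x hx h0
    have := (hcase x).2.1 h0
    rcases hg.2.2 x hx with h' | h'
    · rw [this.1] at h'; exact absurd h' (by decide)
    · rw [this.2] at h'; exact absurd h' (by decide)
  · refine lt_of_le_of_lt (Nat.mul_le_mul_left 4 ?_) hlt
    have : CE.filter (fun x => p x + 2 * q x = 0) ⊆
        ((Finset.range CE.card).filter (fun j => φ (e j) = 0 ∧ β (e j) = 0)).image e := by
      intro x hx
      rw [Finset.mem_filter] at hx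
      have hx1 := hx.1
      rw [← himg] at hx1
      obtain ⟨j, hj, rfl⟩ := Finset.mem_image.1 hx1
      exact Finset.mem_image.2 ⟨j, Finset.mem_filter.2 ⟨hj, (hcase _).2.1 hx.2⟩, rfl⟩
    exact (Finset.card_le_card this).trans Finset.card_image_le
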